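/- arXiv:1212.2243 — 2 statements merged into one kernel-verified Lean document; each statement's English description precedes it below -/
import Mathlib

section
/- Let 𝔽 be a finite field, let a₁,…,a_n be pairwise distinct nonzero elements of 𝔽, let b ∈ 𝔽, and let 0 ≤ δ < n. For λ = (λ₀,…,λ_δ) ∈ 𝔽^{δ+1}, λ ≠ 0, set s_λ(t) = Σ_{i=0}^{δ} λ_i t^i and let C_λ ⊆ 𝔽[z]ⁿ be the 𝔽[z]-submodule generated by the row vector 𝒢(z) = (s_λ(a₁z+b), …, s_λ(a_n z+b)). Then d_free(C_λ) = n(δ+1) (i.e. C_λ is an MDS convolutional code of type [n,1,δ]) if and only if s_λ^{(j)}(b) ≠ 0 for every j with 0 ≤ j ≤ δ, where s_λ^{(j)}(t) = Σ_{r=j}^{δ} binom(r,j) λ_r t^{r−j} is the j-th Hasse derivative of s_λ. -/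
open Polynomial

/-- The weight of a vector of polynomials: the total number of nonzero coefficients. -/
noncomputable def polyWeight {F : Type*} [Field F] {n : ℕ} (c : Fin n → Polynomial F) : ℕ :=
  ∑ j, (c j).support.card

/-- The free distance of a submodule of `𝔽[z]ⁿ`: the minimal weight of a nonzero element. -/
noncomputable def freeDist {F : Type*} [Field F] {n : ℕ}
    (C : Submodule (Polynomial F) (Fin n → Polynomial F)) : ℕ :=
  sInf {d | ∃ c ∈ C, c ≠ 0 ∧ polyWeight c = d}

/-- The Hamming weight of a vector. -/
noncomputable def hammingWt {F : Type*} [Field F] {n : ℕ} (v : Fin n → F) : ℕ :=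
  Set.ncard {j | v j ≠ 0}

/-- The minimum distance of a linear block code. -/
noncomputable def minDist {F : Type*} [Field F] {n : ℕ} (C : Submodule F (Fin n → F)) : ℕ :=
  sInf {d | ∃ v ∈ C, v ≠ 0 ∧ hammingWt v = d}

/-- The `l`-th row distance of the convolutional code with generator matrix `G`. -/
noncomputable def rowDist {F : Type*} [Field F] {k n : ℕ}
    (G : Fin k → Fin n → Polynomial F) (l : ℕ) : ℕ :=
  sInf {d | ∃ α : Fin k → Polynomial F, α ≠ 0 ∧ (∀ i, (α i).natDegree ≤ l) ∧
    polyWeight (fun j => ∑ i, α i * G i j) = d}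

/-- The set of maximal (`k × k`) minors of a `k × n` polynomial matrix. -/
def maximalMinors {F : Type*} [Field F] {k n : ℕ} (G : Fin k → Fin n → Polynomial F) :
    Set (Polynomial F) :=
  {p | ∃ φ : Fin k ↪ Fin n, p = Matrix.det (Matrix.of fun i j => G i (φ j))}

/-- A generator matrix is basic when its maximal minors are coprime, i.e. generate the
unit ideal of `𝔽[z]`. -/
def IsBasic {F : Type*} [Field F] {k n : ℕ} (G : Fin k → Fin n → Polynomial F) : Prop :=
  Ideal.span (maximalMinors G) = ⊤

/-- The degree of the code: the highest degree of the maximal minors of a generator matrix. -/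
noncomputable def degCode {F : Type*} [Field F] {k n : ℕ}
    (G : Fin k → Fin n → Polynomial F) : ℕ :=
  sSup (Polynomial.natDegree '' maximalMinors G)

/-- The degree of the `i`-th row of a polynomial matrix. -/
noncomputable def rowDeg {F : Type*} [Field F] {k n : ℕ}
    (G : Fin k → Fin n → Polynomial F) (i : Fin k) : ℕ :=
  Finset.univ.sup fun j => (G i j).natDegree

/-- A generator matrix is reduced when the sum of its row degrees equals the maximal degree
of its maximal minors. -/
def IsReducedMatrix {F : Type*} [Field F] {k n : ℕ} (G : Fin k → Fin n → Polynomial F) : Prop :=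
  (∑ i, rowDeg G i) = degCode G

/-- A generator matrix is canonical when it is basic and reduced. -/
def IsCanonical {F : Type*} [Field F] {k n : ℕ} (G : Fin k → Fin n → Polynomial F) : Prop :=
  IsBasic G ∧ IsReducedMatrix G

/-!
Since `s(yz + b) = g(yz)` for `g = taylor b s`, whose coefficients are the Hasse derivatives of `s`
at `b`, the generator has weight `n · #supp g`; if the code is MDS, then all `δ + 1` coefficients of
`g` are nonzero.

Conversely, the vector of `z^m`-coefficients of a multiple `α · (g(a₁z), …, g(aₙz))` is the vector
of values at `a₁, …, aₙ` of the polynomial `∑ₖ α_{m-k} g_k y^k`, whose number of nonzero roots is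
at most the difference of its highest and lowest exponents. Let `L` be this difference for `α`, and
let `α` start at degree `0`. Then the first `δ + 1` coefficient vectors, `m = 0, …, δ`, have weights
at least `n - min m L`, and the last ones, taken backwards, at least `n, n - 1, …`. As
`∑_{m ≤ δ} min m L = δ + (δ - 1) + ⋯` (`L` terms, truncated at `0`), the last `L` vectors make up
for what the first `δ + 1` lack.
-/

section SlicePoly

variable {R : Type*} [Semiring R] {α g : R[X]} {m : ℕ}

/-- The coefficient of `z ^ m` in `α(z) * g(yz)`, as a polynomial in `y`: its values at the points
`a i` are the `z ^ m`-coefficients of a codeword, whose zeros are thereby counted as roots. -/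
noncomputable def slicePoly (α g : R[X]) (m : ℕ) : R[X] :=
  ∑ k ∈ Finset.range (m + 1), monomial k (α.coeff (m - k) * g.coeff k)

lemma coeff_slicePoly (α g : R[X]) (m k : ℕ) :
    (slicePoly α g m).coeff k = if k ≤ m then α.coeff (m - k) * g.coeff k else 0 := by
  simp [slicePoly, finsetSum_coeff, coeff_monomial]

lemma natDegree_slicePoly_le (α g : R[X]) (m : ℕ) :
    (slicePoly α g m).natDegree ≤ min (m - α.natTrailingDegree) g.natDegree := by
  refine natDegree_le_iff_coeff_eq_zero.2 fun k hk => ?_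
  rw [coeff_slicePoly]
  split_ifs with hkm
  · rcases min_lt_iff.1 hk with hα | hg
    · rw [coeff_eq_zero_of_lt_natTrailingDegree (by omega), zero_mul]
    · rw [coeff_eq_zero_of_natDegree_lt hg, mul_zero]
  · rfl

lemma le_natTrailingDegree_slicePoly (h : slicePoly α g m ≠ 0) :
    m - α.natDegree ≤ (slicePoly α g m).natTrailingDegree := by
  refine le_natTrailingDegree h fun k hk => ?_
  rw [coeff_slicePoly, coeff_eq_zero_of_natDegree_lt (by omega), zero_mul, ite_self]

lemma slicePoly_add_ne_zero [NoZeroDivisors R] {j k : ℕ} (hα : α.coeff j ≠ 0)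
    (hg : g.coeff k ≠ 0) : slicePoly α g (j + k) ≠ 0 := fun h => by
  have hcoeff : (slicePoly α g (j + k)).coeff k = α.coeff j * g.coeff k := by
    simp [coeff_slicePoly]
  exact mul_ne_zero hα hg (by rw [← hcoeff, h, coeff_zero])

end SlicePoly

lemma eval_slicePoly {R : Type*} [CommSemiring R] (α g : R[X]) (m : ℕ) (y : R) :
    (slicePoly α g m).eval y = (α * g.comp (C y * X)).coeff m := by
  rw [mul_comm, coeff_mul, Finset.Nat.sum_antidiagonal_eq_sum_range_succ_mk]
  simp only [slicePoly, eval_finsetSum, eval_monomial, comp_C_mul_X_coeff]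
  exact Finset.sum_congr rfl fun k _ => by ring

lemma taylor_comp_C_mul_X {R : Type*} [CommSemiring R] (s : R[X]) (b y : R) :
    (taylor b s).comp (C y * X) = s.comp (C y * X + C b) := by
  simp [taylor_apply, comp_assoc]

lemma sum_range_succ_min (δ L : ℕ) :
    ∑ m ∈ Finset.range (δ + 1), min m L = ∑ t ∈ Finset.range L, (δ - t) :=
  calc ∑ m ∈ Finset.range (δ + 1), min m L
      = ∑ m ∈ Finset.range (δ + 1), (Finset.bipartiteAbove (· > ·) (Finset.range L) m).card := by
        refine Finset.sum_congr rfl fun m _ => ?_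
        rw [← Finset.card_range (min m L)]
        congr 1
        ext t
        simp [Finset.mem_bipartiteAbove, and_comm]
    _ = ∑ t ∈ Finset.range L, (Finset.bipartiteBelow (· > ·) (Finset.range (δ + 1)) t).card :=
        Finset.sum_card_bipartiteAbove_eq_sum_card_bipartiteBelow _
    _ = ∑ t ∈ Finset.range L, (δ - t) := by
        refine Finset.sum_congr rfl fun t _ => ?_
        rw [← Nat.card_Ioc t δ]
        congr 1
        ext m
        simp [Finset.mem_bipartiteBelow, and_comm]

lemma mul_le_sum_range_of_le_add {n δ L : ℕ} (hδ : δ ≤ n) (w : ℕ → ℕ)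
    (hfirst : ∀ m ≤ δ, n ≤ w m + min m L) (hlast : ∀ t ≤ δ, n ≤ w (L + (δ - t)) + t) :
    n * (δ + 1) ≤ ∑ m ∈ Finset.range (δ + 1 + L), w m := by
  have htail : ∑ t ∈ Finset.range L, (δ - t) ≤ ∑ i ∈ Finset.range L, w (δ + 1 + i) := by
    rw [← Finset.sum_range_reflect _ L]
    refine Finset.sum_le_sum fun i hi => ?_
    have hiL := Finset.mem_range.1 hi
    by_cases ht : L - 1 - i ≤ δ
    · have hrow := hlast _ ht
      rw [show L + (δ - (L - 1 - i)) = δ + 1 + i by omega] at hrow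
      omega
    · omega
  calc n * (δ + 1) = ∑ _m ∈ Finset.range (δ + 1), n := by simp [mul_comm]
    _ ≤ ∑ m ∈ Finset.range (δ + 1), (w m + min m L) :=
        Finset.sum_le_sum fun m hm => hfirst m (Finset.mem_range_succ_iff.1 hm)
    _ = ∑ m ∈ Finset.range (δ + 1), w m + ∑ t ∈ Finset.range L, (δ - t) := by
        rw [Finset.sum_add_distrib, sum_range_succ_min]
    _ ≤ ∑ m ∈ Finset.range (δ + 1), w m + ∑ i ∈ Finset.range L, w (δ + 1 + i) := by gcongr
    _ = ∑ m ∈ Finset.range (δ + 1 + L), w m := (Finset.sum_range_add _ _ _).symm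

section Weight

variable {F : Type*} [Field F] {n : ℕ}

lemma hammingWt_eq_hammingNorm [DecidableEq F] (v : Fin n → F) : hammingWt v = hammingNorm v := by
  rw [hammingWt, hammingNorm, ← Set.ncard_coe_finset]
  simp

lemma sum_hammingWt_coeff_le_polyWeight (c : Fin n → F[X]) (s : Finset ℕ) :
    ∑ m ∈ s, hammingWt (fun i => (c i).coeff m) ≤ polyWeight c := by
  classical
  simp only [hammingWt_eq_hammingNorm, hammingNorm]
  calc ∑ m ∈ s, (Finset.univ.filter fun i => (c i).coeff m ≠ 0).card
      = ∑ i, (s.filter fun m => (c i).coeff m ≠ 0).card :=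
        Finset.sum_card_bipartiteAbove_eq_sum_card_bipartiteBelow _
    _ ≤ polyWeight c := Finset.sum_le_sum fun i _ => Finset.card_le_card fun m hm =>
        mem_support_iff.2 (Finset.mem_filter.1 hm).2

lemma freeDist_le_polyWeight {C : Submodule F[X] (Fin n → F[X])} {c : Fin n → F[X]} (hc : c ∈ C)
    (hc0 : c ≠ 0) : freeDist C ≤ polyWeight c :=
  Nat.sInf_le ⟨c, hc, hc0, rfl⟩

lemma le_freeDist {C : Submodule F[X] (Fin n → F[X])} (hC : C ≠ ⊥) {d : ℕ}
    (h : ∀ c ∈ C, c ≠ 0 → d ≤ polyWeight c) : d ≤ freeDist C := by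
  obtain ⟨c, hc, hc0⟩ := Submodule.exists_mem_ne_zero_of_ne_bot hC
  refine le_csInf ⟨_, c, hc, hc0, rfl⟩ ?_
  rintro _ ⟨c', hc', hc'0, rfl⟩
  exact h c' hc' hc'0

end Weight

section Evaluation

variable {F : Type*} [Field F] {n : ℕ} {a : Fin n → F}

lemma le_hammingWt_eval_add (ha : ∀ i, a i ≠ 0) (hinj : Function.Injective a) {P : F[X]}
    (hP : P ≠ 0) :
    n ≤ hammingWt (fun i => P.eval (a i)) + (P.natDegree - P.natTrailingDegree) := by
  classical
  obtain ⟨Q, hPQ⟩ : X ^ P.natTrailingDegree ∣ P :=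
    X_pow_dvd_iff.2 fun _ => coeff_eq_zero_of_lt_natTrailingDegree
  have hQ : Q ≠ 0 := by
    rintro rfl
    exact hP (by rw [hPQ, mul_zero])
  have hdeg : P.natDegree = P.natTrailingDegree + Q.natDegree := by
    conv_lhs => rw [hPQ, natDegree_mul (pow_ne_zero _ X_ne_zero) hQ, natDegree_X_pow]
  have hroots : (Finset.univ.filter fun i => ¬P.eval (a i) ≠ 0).card ≤ Q.natDegree := by
    refine (Finset.card_le_card_of_injOn (t := Q.roots.toFinset) a (fun i hi => ?_)
      hinj.injOn).trans (Q.roots.toFinset_card_le.trans Q.card_roots')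
    have hPi : P.eval (a i) = 0 := by simpa using hi
    rw [hPQ] at hPi
    simpa [hQ, ha i] using hPi
  have hsplit := Finset.card_filter_add_card_filter_not (s := (Finset.univ : Finset (Fin n)))
    (fun i => P.eval (a i) ≠ 0)
  rw [Finset.card_fin] at hsplit
  rw [hammingWt_eq_hammingNorm, hammingNorm]
  omega

lemma le_hammingWt_coeff_mul_comp_add (ha : ∀ i, a i ≠ 0) (hinj : Function.Injective a)
    {α g : F[X]} {m : ℕ} (h : slicePoly α g m ≠ 0) :
    n ≤ hammingWt (fun i => (α * g.comp (C (a i) * X)).coeff m) +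
      (min (m - α.natTrailingDegree) g.natDegree - (m - α.natDegree)) := by
  simp only [← eval_slicePoly]
  exact (le_hammingWt_eval_add ha hinj h).trans <| Nat.add_le_add_left
    (tsub_le_tsub (natDegree_slicePoly_le α g m) (le_natTrailingDegree_slicePoly h)) _

lemma mul_le_polyWeight_mul_comp (ha : ∀ i, a i ≠ 0) (hinj : Function.Injective a) {α g : F[X]}
    (hα : α ≠ 0) (hdeg : g.natDegree ≤ n) (hg : ∀ k ≤ g.natDegree, g.coeff k ≠ 0) :
    n * (g.natDegree + 1) ≤ polyWeight fun i => α * g.comp (C (a i) * X) := by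
  set N := α.natTrailingDegree
  obtain ⟨L, hL⟩ := Nat.exists_eq_add_of_le (natTrailingDegree_le_natDegree α)
  refine le_trans ?_ (sum_hammingWt_coeff_le_polyWeight _
    (Finset.Ico N (N + (g.natDegree + 1 + L))))
  rw [Finset.sum_Ico_eq_sum_range, Nat.add_sub_cancel_left]
  refine mul_le_sum_range_of_le_add hdeg _ (fun m hm => ?_) fun t ht => ?_
  · have hslice : slicePoly α g (N + m) ≠ 0 :=
      slicePoly_add_ne_zero (trailingCoeff_nonzero_iff_nonzero.2 hα) (hg m hm)
    have := le_hammingWt_coeff_mul_comp_add ha hinj hslice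
    omega
  · have hslice : slicePoly α g (N + (L + (g.natDegree - t))) ≠ 0 := by
      rw [← add_assoc, ← hL]
      exact slicePoly_add_ne_zero (leadingCoeff_ne_zero.2 hα) (hg _ (Nat.sub_le _ _))
    have := le_hammingWt_coeff_mul_comp_add ha hinj hslice
    omega

lemma polyWeight_comp_C_mul_X (ha : ∀ i, a i ≠ 0) (g : F[X]) :
    polyWeight (fun i => g.comp (C (a i) * X)) = n * g.support.card := by
  have hsupp : ∀ i, (g.comp (C (a i) * X)).support = g.support := fun i => by
    ext k
    simp [ha i]
  simp [polyWeight, hsupp]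

lemma freeDist_span_comp_C_mul_X_eq_iff {δ : ℕ} (hn : 0 < n) (hδ : δ ≤ n) (ha : ∀ i, a i ≠ 0)
    (hinj : Function.Injective a) {g : F[X]} (hg0 : g ≠ 0) (hdeg : g.natDegree ≤ δ) :
    freeDist (Submodule.span F[X] {fun i => g.comp (C (a i) * X)}) = n * (δ + 1) ↔
      ∀ k ≤ δ, g.coeff k ≠ 0 := by
  set G : Fin n → F[X] := fun i => g.comp (C (a i) * X)
  have hG : G ≠ 0 := fun h => hg0 <|
    (comp_C_mul_X_eq_zero_iff (mem_nonZeroDivisors_of_ne_zero (ha ⟨0, hn⟩))).1 (congrFun h ⟨0, hn⟩)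
  have hle : freeDist (Submodule.span F[X] {G}) ≤ n * g.support.card :=
    (freeDist_le_polyWeight (Submodule.mem_span_singleton_self G) hG).trans_eq
      (polyWeight_comp_C_mul_X ha g)
  have hsub : g.support ⊆ Finset.range (δ + 1) := fun k hk =>
    Finset.mem_range_succ_iff.2 ((le_natDegree_of_mem_supp k hk).trans hdeg)
  constructor
  · intro h k hk
    rw [h] at hle
    have hsupp : g.support = Finset.range (δ + 1) := Finset.eq_of_subset_of_card_le hsub
      (by simpa using Nat.le_of_mul_le_mul_left hle hn)
    exact mem_support_iff.1 (hsupp ▸ Finset.mem_range_succ_iff.2 hk)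
  · intro h
    obtain rfl : g.natDegree = δ := hdeg.antisymm (le_natDegree_of_ne_zero (h δ le_rfl))
    refine le_antisymm (hle.trans (Nat.mul_le_mul_left n ?_))
      (le_freeDist (Submodule.span_singleton_eq_bot.not.2 hG) fun c hc hc0 => ?_)
    · simpa using Finset.card_le_card hsub
    · obtain ⟨α, rfl⟩ := Submodule.mem_span_singleton.1 hc
      exact mul_le_polyWeight_mul_comp ha hinj (left_ne_zero_of_smul hc0) hδ h

end Evaluation

theorem goppa_MDS_iff_hasseDeriv_ne_zero_general {F : Type*} [Field F] {n δ : ℕ} (hn : 0 < n)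
    (hδ : δ ≤ n) {a : Fin n → F} (ha : ∀ i, a i ≠ 0) (hinj : Function.Injective a) (b : F)
    {s : F[X]} (hs : s ≠ 0) (hdeg : s.natDegree ≤ δ) :
    freeDist (Submodule.span F[X] {fun j => s.comp (C (a j) * X + C b)}) = n * (δ + 1) ↔
      ∀ j ≤ δ, (hasseDeriv j s).eval b ≠ 0 := by
  simp only [← taylor_comp_C_mul_X, ← taylor_coeff]
  exact freeDist_span_comp_C_mul_X_eq_iff hn hδ ha hinj ((taylor_eq_zero b s).not.2 hs)
    ((natDegree_taylor s b).trans_le hdeg)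

/-- The 1-dimensional convolutional Goppa code generated by
`(s_λ(a₁z+b), …, s_λ(a_nz+b))`, for pairwise distinct nonzero `a_i` and `0 ≤ δ < n`,
is MDS (i.e. `d_free = n(δ+1)`) if and only if every Hasse derivative `s_λ^{(j)}(b)`,
`0 ≤ j ≤ δ`, is nonzero. -/
theorem goppa_MDS_iff_hasseDeriv_ne_zero {F : Type*} [Field F] [Fintype F] {n δ : ℕ}
    (hδ : δ < n)
    (a : Fin n → F) (ha : ∀ i, a i ≠ 0) (hinj : Function.Injective a)
    (b : F) (lam : Fin (δ + 1) → F) (hlam : lam ≠ 0) :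
    freeDist (Submodule.span (Polynomial F)
        {fun j : Fin n => (∑ i : Fin (δ + 1), Polynomial.C (lam i) * Polynomial.X ^ (i : ℕ)).comp
          (Polynomial.C (a j) * Polynomial.X + Polynomial.C b)}) = n * (δ + 1)
      ↔ ∀ j : Fin (δ + 1),
        (Polynomial.hasseDeriv (j : ℕ)
          (∑ i : Fin (δ + 1), Polynomial.C (lam i) * Polynomial.X ^ (i : ℕ))).eval b ≠ 0 := by
  classical
  simpa only [C_mul_X_pow_eq_monomial, ← ofFn_eq_sum_monomial, Fin.forall_iff, Nat.lt_succ_iff]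
    using goppa_MDS_iff_hasseDeriv_ne_zero_general (Nat.zero_lt_of_lt hδ) hδ.le ha hinj b
      ((map_ne_zero_iff _ (injective_ofFn _)).2 hlam)
      (Nat.lt_succ_iff.1 (ofFn_natDegree_lt (Nat.succ_pos δ) lam))
end

section
/- Let 𝔽 be any finite field, let a₁,…,a_n be pairwise distinct nonzero elements of 𝔽, let b ∈ 𝔽, and let 0 ≤ δ < n. Then there exists λ = (λ₀,…,λ_δ) ∈ 𝔽^{δ+1} such that the 1-dimensional convolutional code C_λ generated over 𝔽[z] by the row vector (s_λ(a₁z+b), …, s_λ(a_n z+b)), with s_λ(t) = Σ_{i=0}^{δ} λ_i t^i, satisfies d_free(C_λ) = n(δ+1); in particular, MDS convolutional codes of type [n,1,δ] exist over 𝔽 itself, without enlarging the base field. -/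
/-!
Taking `s_λ(t) = q(t - b)` with `q = 1 + z + ⋯ + z ^ δ` turns the generator into
`(q(a₁z), …, q(aₙz))`, which has weight `n(δ+1)`. For `u ≠ 0` the coefficients of `z ^ m` in
`u(z) q(a₁z), …, u(z) q(aₙz)` are the values at the `aⱼ` of one polynomial
`P_m(x) = ∑ k ≤ δ, u_{m-k} x ^ k`.

Let `s` be the lowest exponent of `u`, and `l ≥ s` the first exponent of `u` followed by `δ`
vanishing coefficients. For `s ≤ m ≤ l + δ` the polynomial `P_m` is nonzero, and its exponents lie
in an interval `K_m` of possible `k`, so fewer than `#K_m` of the nonzero `aⱼ` are roots. Since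
`∑ #K_m = (δ+1)(l-s+1)`, at most `(l-s)δ` of the `n(l-s+δ+1)` coefficients in this window vanish,
and at least `n(δ+1)` of them survive because `δ ≤ n`.
-/

open Polynomial

open Finset

section Gap

lemma exists_mem_gap_and_cover (A : Finset ℕ) (δ : ℕ) {s : ℕ} (hs : s ∈ A) :
    ∃ l ∈ A, s ≤ l ∧ (∀ k ∈ A, k ≤ l + δ → k ≤ l) ∧
      ∀ m ∈ Icc s (l + δ), ∃ k ∈ A, k ≤ m ∧ m ≤ k + δ := by
  induction hd : A.sup id - s using Nat.strong_induction_on generalizing s with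
  | _ d ih =>
    by_cases hgap : ∀ k ∈ A, k ≤ s + δ → k ≤ s
    · exact ⟨s, hs, le_rfl, hgap, fun m hm => ⟨s, hs, mem_Icc.1 hm⟩⟩
    · push Not at hgap
      obtain ⟨k, hk, hkδ, hsk⟩ := hgap
      have hksup : k ≤ A.sup id := le_sup (f := id) hk
      obtain ⟨l, hl, hkl, hlgap, hcover⟩ := ih _ (by omega) hk rfl
      refine ⟨l, hl, hsk.le.trans hkl, hlgap, fun m hm => ?_⟩
      rw [mem_Icc] at hm
      rcases lt_or_ge m k with hmk | hkm
      · exact ⟨s, hs, hm.1, by omega⟩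
      · exact hcover m (mem_Icc.2 ⟨hkm, hm.2⟩)

-- Both sides count the pairs `(m, k)` with `k ≤ δ` and `s ≤ m - k ≤ l`.
lemma sum_card_Icc_sub_min (s l δ : ℕ) :
    ∑ m ∈ Icc s (l + δ), #(Icc (m - l) (min (m - s) δ)) = (δ + 1) * (l + 1 - s) := by
  have hrow : ∀ m ∈ Icc s (l + δ), Icc (m - l) (min (m - s) δ) =
      (range (δ + 1)).bipartiteAbove (fun m k => s + k ≤ m ∧ m ≤ l + k) m := fun m hm => by
    ext k
    simp only [mem_Icc, mem_bipartiteAbove, mem_range] at hm ⊢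
    omega
  have hcol : ∀ k ∈ range (δ + 1),
      (Icc s (l + δ)).bipartiteBelow (fun m k => s + k ≤ m ∧ m ≤ l + k) k =
        Icc (s + k) (l + k) := fun k hk => by
    ext m
    simp only [mem_Icc, mem_bipartiteBelow, mem_range] at hk ⊢
    omega
  rw [sum_congr rfl fun m hm => congrArg card (hrow m hm),
    sum_card_bipartiteAbove_eq_sum_card_bipartiteBelow,
    sum_congr rfl fun k hk => congrArg card (hcol k hk)]
  have hcard : ∀ k ∈ range (δ + 1), #(Icc (s + k) (l + k)) = l + 1 - s := fun k _ => by
    rw [Nat.card_Icc]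
    omega
  rw [sum_const_nat hcard, card_range]

end Gap

section Dilation

section Semiring

variable {R : Type*} [CommSemiring R]

/-- The coefficient of `z ^ m` in `u(z) q(xz)`, as a polynomial in the dilation factor `x`. -/
noncomputable def mulDilationCoeff (u q : R[X]) (m : ℕ) : R[X] :=
  ∑ k ∈ range (m + 1), monomial k (u.coeff (m - k) * q.coeff k)

lemma eval_mulDilationCoeff (u q : R[X]) (m : ℕ) (x : R) :
    (mulDilationCoeff u q m).eval x = (u * q.comp (C x * X)).coeff m := by
  rw [mul_comm u, coeff_mul, Nat.sum_antidiagonal_eq_sum_range_succ_mk, mulDilationCoeff,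
    eval_finsetSum]
  refine sum_congr rfl fun k _ => ?_
  rw [eval_monomial, comp_C_mul_X_coeff]
  ring

lemma mem_support_mulDilationCoeff [NoZeroDivisors R] {u q : R[X]} {m k : ℕ} :
    k ∈ (mulDilationCoeff u q m).support ↔ k ≤ m ∧ m - k ∈ u.support ∧ k ∈ q.support := by
  simp [mulDilationCoeff, finsetSum_coeff, coeff_monomial]

end Semiring

variable {R : Type*} [CommRing R] [IsDomain R]

lemma card_eval_eq_zero_lt_card_Icc {ι : Type*} [Fintype ι] [DecidableEq R] {a : ι → R}
    (ha : ∀ i, a i ≠ 0) (hinj : Function.Injective a) {P : R[X]} (hP : P ≠ 0) {lo hi : ℕ}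
    (hsupp : P.support ⊆ Icc lo hi) :
    #{j | P.eval (a j) = 0} < #(Icc lo hi) := by
  obtain ⟨Q, rfl⟩ : X ^ lo ∣ P := X_pow_dvd_iff.2 fun d hd => by
    by_contra hcoeff
    exact hd.not_ge (mem_Icc.1 (hsupp (mem_support_iff.2 hcoeff))).1
  have hQ : Q ≠ 0 := right_ne_zero_of_mul hP
  have hdeg : Q.natDegree + lo ≤ hi :=
    (mem_Icc.1 (hsupp (by simpa [coeff_X_pow_mul] using hQ))).2
  calc #{j | (X ^ lo * Q : R[X]).eval (a j) = 0}
      ≤ #Q.roots.toFinset := card_le_card_of_injOn a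
        (fun j hj => by simpa [hQ, ha j] using hj) hinj.injOn
    _ ≤ Q.natDegree := Q.roots.toFinset_card_le.trans (card_roots' Q)
    _ < #(Icc lo hi) := by rw [Nat.card_Icc]; omega

lemma card_coeff_mul_dilation_eq_zero_lt {ι : Type*} [Fintype ι] [DecidableEq R] {a : ι → R}
    (ha : ∀ i, a i ≠ 0) (hinj : Function.Injective a) {u q : R[X]} {s l δ m : ℕ}
    (hq : q.support = range (δ + 1)) (hs : ∀ k ∈ u.support, s ≤ k)
    (hgap : ∀ k ∈ u.support, k ≤ l + δ → k ≤ l) (hm : m ≤ l + δ)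
    (hcover : ∃ k ∈ u.support, k ≤ m ∧ m ≤ k + δ) :
    #{j | (u * q.comp (C (a j) * X)).coeff m = 0} < #(Icc (m - l) (min (m - s) δ)) := by
  have hne : mulDilationCoeff u q m ≠ 0 := by
    obtain ⟨k, hk, hkm, hmk⟩ := hcover
    refine support_nonempty.1 ⟨m - k, mem_support_mulDilationCoeff.2 ⟨m.sub_le k, ?_, ?_⟩⟩
    · rwa [Nat.sub_sub_self hkm]
    · rw [hq, mem_range]
      omega
  have hsupp : (mulDilationCoeff u q m).support ⊆ Icc (m - l) (min (m - s) δ) := fun k hk => by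
    obtain ⟨hkm, hku, hkq⟩ := mem_support_mulDilationCoeff.1 hk
    have hlower := hs _ hku
    have hupper := hgap _ hku (by omega)
    rw [hq, mem_range] at hkq
    rw [mem_Icc]
    omega
  simpa only [eval_mulDilationCoeff] using card_eval_eq_zero_lt_card_Icc ha hinj hne hsupp

end Dilation

section FreeDistance

variable {F : Type*} [Field F] {n : ℕ}

lemma card_mul_le_polyWeight_add [DecidableEq F] (c : Fin n → F[X]) (T : Finset ℕ) :
    #T * n ≤ polyWeight c + ∑ m ∈ T, #{j | (c j).coeff m = 0} := by
  have hnonzero : ∑ m ∈ T, #{j | (c j).coeff m ≠ 0} ≤ polyWeight c :=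
    calc ∑ m ∈ T, #{j | (c j).coeff m ≠ 0}
        = ∑ j, #{m ∈ T | (c j).coeff m ≠ 0} :=
          sum_card_bipartiteAbove_eq_sum_card_bipartiteBelow fun m j => (c j).coeff m ≠ 0
      _ ≤ polyWeight c := sum_le_sum fun j _ => card_le_card fun m hm =>
          mem_support_iff.2 (mem_filter.1 hm).2
  calc #T * n = ∑ m ∈ T, (#{j | (c j).coeff m ≠ 0} + #{j | (c j).coeff m = 0}) := by
        refine (sum_const_nat fun m _ => ?_).symm
        rw [add_comm, card_filter_add_card_filter_not, card_univ, Fintype.card_fin]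
    _ ≤ polyWeight c + ∑ m ∈ T, #{j | (c j).coeff m = 0} := by
        rw [sum_add_distrib]
        exact Nat.add_le_add_right hnonzero _

lemma freeDist_span_singleton {g : Fin n → F[X]} (hg : g ≠ 0)
    (hmin : ∀ u : F[X], u ≠ 0 → polyWeight g ≤ polyWeight (u • g)) :
    freeDist (Submodule.span F[X] {g}) = polyWeight g := by
  refine IsLeast.csInf_eq ⟨⟨g, Submodule.mem_span_singleton_self g, hg, rfl⟩, ?_⟩
  rintro _ ⟨c, hc, hc0, rfl⟩
  obtain ⟨u, rfl⟩ := Submodule.mem_span_singleton.1 hc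
  exact hmin u (left_ne_zero_of_smul hc0)

lemma polyWeight_dilation {a : Fin n → F} (ha : ∀ i, a i ≠ 0) (q : F[X]) :
    (polyWeight fun j => q.comp (C (a j) * X)) = n * #q.support := by
  have hsupp : ∀ j, (q.comp (C (a j) * X)).support = q.support := fun j => by
    ext k
    simp [comp_C_mul_X_coeff, ha j]
  simp only [polyWeight, hsupp, sum_const, card_univ, Fintype.card_fin, smul_eq_mul]

variable {δ : ℕ} {a : Fin n → F} {q : F[X]}

lemma le_polyWeight_mul_dilation (hδ : δ ≤ n) (ha : ∀ i, a i ≠ 0)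
    (hinj : Function.Injective a) (hq : q.support = range (δ + 1)) {u : F[X]} (hu : u ≠ 0) :
    n * (δ + 1) ≤ polyWeight fun j => u * q.comp (C (a j) * X) := by
  classical
  set c : Fin n → F[X] := fun j => u * q.comp (C (a j) * X)
  obtain ⟨l, -, hsl, hgap, hcover⟩ :=
    exists_mem_gap_and_cover u.support δ (natTrailingDegree_mem_support_of_nonzero hu)
  set s := u.natTrailingDegree
  have hlength : #(Icc s (l + δ)) = l - s + δ + 1 := by
    rw [Nat.card_Icc]
    omega
  have hrow : ∀ m ∈ Icc s (l + δ),
      #{j | (c j).coeff m = 0} + 1 ≤ #(Icc (m - l) (min (m - s) δ)) := fun m hm =>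
    card_coeff_mul_dilation_eq_zero_lt ha hinj hq
      (fun _ => natTrailingDegree_le_of_mem_supp _) hgap (mem_Icc.1 hm).2 (hcover m hm)
  have hzeros : ∑ m ∈ Icc s (l + δ), #{j | (c j).coeff m = 0} ≤ (l - s) * δ := by
    have hsum := sum_le_sum hrow
    rw [sum_card_Icc_sub_min, sum_add_distrib, sum_const, smul_eq_mul, mul_one, hlength,
      show l + 1 - s = l - s + 1 by omega] at hsum
    linarith
  have htotal := card_mul_le_polyWeight_add c (Icc s (l + δ))
  rw [hlength] at htotal
  have hLδ : (l - s) * δ ≤ (l - s) * n := Nat.mul_le_mul_left _ hδ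
  linarith

lemma freeDist_span_dilation (hn : 0 < n) (hδ : δ ≤ n) (ha : ∀ i, a i ≠ 0)
    (hinj : Function.Injective a) (hq : q.support = range (δ + 1)) :
    freeDist (Submodule.span F[X] {fun j => q.comp (C (a j) * X)}) = n * (δ + 1) := by
  have hweight : (polyWeight fun j => q.comp (C (a j) * X)) = n * (δ + 1) := by
    rw [polyWeight_dilation ha, hq, card_range]
  have hne : (fun j => q.comp (C (a j) * X)) ≠ 0 := fun h => by
    have hpos : 0 < n * (δ + 1) := by positivity
    rw [← hweight, h] at hpos
    simp [polyWeight] at hpos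
  rw [freeDist_span_singleton hne fun u hu => ?_, hweight]
  exact hweight.trans_le (le_polyWeight_mul_dilation hδ ha hinj hq hu)

end FreeDistance

lemma support_sum_range_X_pow {R : Type*} [Semiring R] [Nontrivial R] (d : ℕ) :
    (∑ i ∈ range d, X ^ i : R[X]).support = range d := by
  ext k
  simp [coeff_X_pow]

lemma exists_sum_comp_C_mul_X_add_C_eq {R : Type*} [CommRing R] (q : R[X]) {d : ℕ}
    (hq : q.natDegree < d) (b : R) :
    ∃ lam : Fin d → R, ∀ x : R,
      (∑ i : Fin d, C (lam i) * X ^ (i : ℕ)).comp (C x * X + C b) = q.comp (C x * X) := by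
  refine ⟨fun i => (taylor (-b) q).coeff i, fun x => ?_⟩
  rw [Fin.sum_univ_eq_sum_range fun i => C ((taylor (-b) q).coeff i) * X ^ i,
    ← as_sum_range_C_mul_X_pow' _ (by rwa [natDegree_taylor]), taylor_apply, comp_assoc]
  simp only [add_comp, X_comp, C_neg, neg_comp, C_comp, add_neg_cancel_right]

theorem exists_MDS_goppa_general {F : Type*} [Field F] {n δ : ℕ} (hn : 0 < n) (hδ : δ ≤ n)
    (a : Fin n → F) (ha : ∀ i, a i ≠ 0) (hinj : Function.Injective a) (b : F) :
    ∃ lam : Fin (δ + 1) → F,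
      freeDist (Submodule.span (Polynomial F)
        {fun j : Fin n =>
          (∑ i : Fin (δ + 1), Polynomial.C (lam i) * Polynomial.X ^ (i : ℕ)).comp
            (Polynomial.C (a j) * Polynomial.X + Polynomial.C b)}) = n * (δ + 1) := by
  have hsupp := support_sum_range_X_pow (R := F) (δ + 1)
  set q : F[X] := ∑ i ∈ range (δ + 1), X ^ i
  have hdeg : q.natDegree < δ + 1 :=
    Nat.lt_succ_of_le <| natDegree_sum_le_of_forall_le _ _ fun i hi =>
      (natDegree_X_pow_le i).trans (mem_range_succ_iff.1 hi)
  obtain ⟨lam, hlam⟩ := exists_sum_comp_C_mul_X_add_C_eq q hdeg b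
  refine ⟨lam, ?_⟩
  simp only [hlam]
  exact freeDist_span_dilation hn hδ ha hinj hsupp

/-- Over any finite field `𝔽` with `n` pairwise distinct nonzero elements
`a₁,…,a_n`, any `b ∈ 𝔽` and any `0 ≤ δ < n`, there exists a parameter `λ` such that the
1-dimensional convolutional Goppa code generated by `(s_λ(a₁z+b), …, s_λ(a_nz+b))` attains
the generalized Singleton bound `d_free = n(δ+1)`: MDS convolutional codes of type
`[n,1,δ]` exist over `𝔽` itself. -/
theorem exists_MDS_goppa {F : Type*} [Field F] [Fintype F] {n δ : ℕ} (hδ : δ < n)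
    (a : Fin n → F) (ha : ∀ i, a i ≠ 0) (hinj : Function.Injective a) (b : F) :
    ∃ lam : Fin (δ + 1) → F,
      freeDist (Submodule.span (Polynomial F)
        {fun j : Fin n =>
          (∑ i : Fin (δ + 1), Polynomial.C (lam i) * Polynomial.X ^ (i : ℕ)).comp
            (Polynomial.C (a j) * Polynomial.X + Polynomial.C b)}) = n * (δ + 1) :=
  exists_MDS_goppa_general (Nat.zero_lt_of_lt hδ) hδ.le a ha hinj b
end
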